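/- Let a > 0 be a real number and j ≥ 1 a natural number with e·a < j. Then the tail of the exponential series satisfies ∑_{m=j}^∞ a^m/m! ≤ (1/√(2πj)) · (e·a/j)^j · (j/(j − e·a)). -/

import Mathlib

/-- For real `a > 0` and natural `j ≥ 1` with `e * a < j`, the tail of the
exponential series satisfies
`∑_{m=j}^∞ a^m/m! ≤ (1/√(2πj)) * (e a / j)^j * (j/(j - e a))`. -/
theorem exp_series_tail_stirling_bound (a : ℝ) (ha : 0 < a) (j : ℕ) (hj : 1 ≤ j)
    (hja : Real.exp 1 * a < j) :
    ∑' m : ℕ, a ^ (j + m) / ((j + m).factorial : ℝ) ≤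
      (1 / Real.sqrt (2 * Real.pi * j)) * (Real.exp 1 * a / j) ^ j *
        (j / ((j : ℝ) - Real.exp 1 * a)) := by
  have hj0 : (0 : ℝ) < j := by exact_mod_cast hj
  have he : (1 : ℝ) ≤ Real.exp 1 := Real.one_le_exp (by norm_num)
  have hpi := Real.pi_pos
  have hr0 : 0 ≤ Real.exp 1 * a / j := by positivity
  have hr1 : Real.exp 1 * a / j < 1 := (div_lt_one hj0).2 hja
  have hS : 0 < Real.sqrt (2 * Real.pi * j) := by positivity
  have hst := Stirling.le_factorial_stirling j
  have hfirst : a ^ j / (j.factorial : ℝ) ≤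
      (1 / Real.sqrt (2 * Real.pi * j)) * (Real.exp 1 * a / j) ^ j := by
    calc a ^ j / (j.factorial : ℝ)
        ≤ a ^ j / (Real.sqrt (2 * Real.pi * j) * (j / Real.exp 1) ^ j) := by gcongr
      _ = _ := by
        simp only [div_pow, mul_pow]
        field_simp
  have hterm : ∀ m : ℕ, a ^ (j + m) / ((j + m).factorial : ℝ) ≤
      (1 / Real.sqrt (2 * Real.pi * j)) * (Real.exp 1 * a / j) ^ j *
        (Real.exp 1 * a / j) ^ m := by
    intro m
    have hf : (j.factorial : ℝ) * (j : ℝ) ^ m ≤ ((j + m).factorial : ℝ) := by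
      have h1 : j.factorial * j ^ m ≤ (j + m).factorial :=
        le_trans (Nat.mul_le_mul_left _ (Nat.pow_le_pow_left (Nat.le_succ j) m))
          Nat.factorial_mul_pow_le_factorial
      exact_mod_cast h1
    have hfp : (0 : ℝ) < j.factorial := by exact_mod_cast j.factorial_pos
    calc a ^ (j + m) / ((j + m).factorial : ℝ)
        ≤ a ^ (j + m) / ((j.factorial : ℝ) * (j : ℝ) ^ m) := by gcongr
      _ = a ^ j / (j.factorial : ℝ) * (a / j) ^ m := by
        rw [pow_add, div_pow, mul_div_mul_comm]
      _ ≤ _ := by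
        have : a ≤ Real.exp 1 * a := le_mul_of_one_le_left ha.le he
        gcongr
  have hg := (hasSum_geometric_of_lt_one hr0 hr1).mul_left
    ((1 / Real.sqrt (2 * Real.pi * j)) * (Real.exp 1 * a / j) ^ j)
  have hs : Summable fun m : ℕ => a ^ (j + m) / ((j + m).factorial : ℝ) :=
    Summable.of_nonneg_of_le (fun m => by positivity) hterm hg.summable
  have hk : (j : ℝ) / ((j : ℝ) - Real.exp 1 * a) = (1 - Real.exp 1 * a / j)⁻¹ := by
    rw [one_sub_div hj0.ne', inv_div]
  rw [hk]
  exact hasSum_le hterm hs.hasSum hg
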